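/- Morrey inequality with tracked constant: for every integer m ≥ 2 there exists a constant C = C(m) such that for every exponent q ∈ (m, m+1) and every Lipschitz function g : B₁ → ℝ on the open unit ball B₁ ⊂ ℝᵐ, one has sup_{x,y ∈ B₁} |g(x) − g(y)| ≤ C · (q − m)^{−1+1/q} · ( ∫_{B₁} |∇g|^q )^{1/q}, where ∇g denotes the (almost everywhere defined) gradient of g. -/

import Mathlib

open MeasureTheory

/-!
Averaging over `z` the fundamental theorem of calculus along the segment from `x` to `z`, and
changing variables to `w = x + t (z - x)`, bounds the mean of `|f - f x|` by a multiple of the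
Riesz potential `∫ |∇f w| |w - x| ^ (1 - d) dw`; the factor `t ^ (-d)` from the change of variables
leaves `|w - x| ^ (1 - d)` because, on a domain within distance `D` of `x`, the point `w` is reached
only for `t > |w - x| / D`. In the Hölder inequality with conjugate exponent `p = q / (q - 1)` the
kernel contributes `∫ |w - x| ^ ((1 - d) p)`, whose radial integrand is
`r ^ ((q - d) / (q - 1) - 1)`. Its integral is a multiple of `(q - 1) / (q - d)`, and the power
`1 / p = 1 - 1 / q` of this quotient is the source of the factor `(q - d) ^ (-1 + 1 / q)`.
-/

open AffineMap Metric Module Set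
open scoped ENNReal NNReal

section Radial

theorem lintegral_Ioo_rpow {a r : ℝ} (ha : -1 < a) (hr : 0 ≤ r) :
    ∫⁻ t in Ioo 0 r, ENNReal.ofReal (t ^ a) = ENNReal.ofReal (r ^ (a + 1) / (a + 1)) := by
  have hint : IntervalIntegrable (fun t : ℝ ↦ t ^ a) volume 0 r :=
    intervalIntegral.intervalIntegrable_rpow' ha
  rw [restrict_Ioo_eq_restrict_Ioc, ← ofReal_integral_eq_lintegral_ofReal hint.1,
    ← intervalIntegral.integral_of_le hr, integral_rpow (.inl ha),
    Real.zero_rpow (by linarith), sub_zero]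
  filter_upwards [ae_restrict_mem measurableSet_Ioc] with t ht using Real.rpow_nonneg ht.1.le a

theorem lintegral_Ioi_rpow {a c : ℝ} (ha : a < -1) (hc : 0 < c) :
    ∫⁻ t in Ioi c, ENNReal.ofReal (t ^ a) = ENNReal.ofReal (-c ^ (a + 1) / (a + 1)) := by
  rw [← ofReal_integral_eq_lintegral_ofReal (integrableOn_Ioi_rpow_of_lt ha hc),
    integral_Ioi_rpow_of_lt ha hc]
  filter_upwards [ae_restrict_mem measurableSet_Ioi] with t ht
    using Real.rpow_nonneg (hc.trans ht).le a

theorem lintegral_Ioi_div_rpow_neg {p r D : ℝ} (hp : 1 < p) (hr : 0 < r) (hD : 0 < D) :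
    ∫⁻ t in Ioi (r / D), ENNReal.ofReal (t ^ (-p)) =
      ENNReal.ofReal (D ^ (p - 1) / (p - 1)) * ENNReal.ofReal r ^ (1 - p) := by
  have : 0 < p - 1 := by linarith
  rw [lintegral_Ioi_rpow (by linarith) (by positivity), ENNReal.ofReal_rpow_of_pos hr,
    ← ENNReal.ofReal_mul (by positivity), Real.div_rpow hr.le hD.le,
    show -p + 1 = -(p - 1) by ring, neg_div_neg_eq, Real.rpow_neg hD.le, div_inv_eq_mul,
    show 1 - p = -(p - 1) by ring]
  congr 1
  ring

theorem lintegral_mul_setLIntegral_ball {X : Type*} [PseudoMetricSpace X] [MeasurableSpace X]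
    [OpensMeasurableSpace X] [SecondCountableTopology X] {τ : Measure ℝ} [SFinite τ]
    {ν : Measure X} [SFinite ν] {k : ℝ → ℝ≥0∞} (hk : Measurable k) {φ : X → ℝ≥0∞}
    (hφ : Measurable φ) (x : X) {D : ℝ} (hD : 0 < D) :
    ∫⁻ t, k t * ∫⁻ w in ball x (t * D), φ w ∂ν ∂τ =
      ∫⁻ w, φ w * ∫⁻ t in Ioi (dist w x / D), k t ∂τ ∂ν := by
  have hset : MeasurableSet {p : ℝ × X | dist p.2 x < p.1 * D} :=
    measurableSet_lt (by fun_prop) (by fun_prop)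
  have hmeas : Measurable (Function.uncurry fun t w ↦
      k t * (ball x (t * D)).indicator φ w) :=
    (hk.comp measurable_fst).mul ((hφ.comp measurable_snd).indicator hset)
  have hswap (t : ℝ) (w : X) : k t * (ball x (t * D)).indicator φ w =
      φ w * (Ioi (dist w x / D)).indicator k t := by
    simp only [indicator, mem_ball, mem_Ioi, div_lt_iff₀ hD, mul_comm (φ w), mul_ite, ite_mul,
      mul_zero, zero_mul]
  calc
    _ = ∫⁻ t, ∫⁻ w, k t * (ball x (t * D)).indicator φ w ∂ν ∂τ := by
      refine lintegral_congr fun t ↦ ?_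
      rw [← lintegral_indicator measurableSet_ball,
        lintegral_const_mul _ (hφ.indicator measurableSet_ball)]
    _ = ∫⁻ w, ∫⁻ t, φ w * (Ioi (dist w x / D)).indicator k t ∂τ ∂ν := by
      rw [lintegral_lintegral_swap hmeas.aemeasurable]
      simp only [hswap]
    _ = _ := by
      refine lintegral_congr fun w ↦ ?_
      rw [lintegral_const_mul _ (hk.indicator measurableSet_Ioi),
        lintegral_indicator measurableSet_Ioi]

variable {E : Type*} [NormedAddCommGroup E] [NormedSpace ℝ E] [FiniteDimensional ℝ E]
  [MeasurableSpace E] [BorelSpace E] (μ : Measure E) [μ.IsAddHaarMeasure]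

theorem lintegral_fun_norm_addHaar [Nontrivial E] {f : ℝ → ℝ≥0∞} (hf : Measurable f) :
    ∫⁻ x, f ‖x‖ ∂μ =
      finrank ℝ E * μ (ball 0 1) *
        ∫⁻ t in Ioi (0 : ℝ), ENNReal.ofReal (t ^ (finrank ℝ E - 1)) * f t := by
  have hf_Ioi : Measurable fun t : Ioi (0 : ℝ) ↦ f t := hf.comp measurable_subtype_coe
  calc
    ∫⁻ x, f ‖x‖ ∂μ = ∫⁻ x : ({0}ᶜ : Set E), f ‖x.1‖ ∂(μ.comap (↑)) := by
      rw [lintegral_subtype_comap (measurableSet_singleton 0).compl fun x ↦ f ‖x‖,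
        restrict_compl_singleton]
    _ = ∫⁻ p, f p.2 ∂μ.toSphere.prod (.volumeIoiPow (finrank ℝ E - 1)) := by
      simpa using (μ.measurePreserving_homeomorphUnitSphereProd.lintegral_comp
        (hf_Ioi.comp measurable_snd))
    _ = μ.toSphere univ * ∫⁻ t : Ioi (0 : ℝ), f t ∂.volumeIoiPow (finrank ℝ E - 1) := by
      rw [← lintegral_one,
        ← lintegral_prod_mul (f := fun _ ↦ 1) aemeasurable_const hf_Ioi.aemeasurable]
      simp only [one_mul]
    _ = _ := by
      rw [μ.toSphere_apply_univ, Measure.volumeIoiPow,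
        lintegral_withDensity_eq_lintegral_mul _ (by fun_prop) hf_Ioi,
        ← lintegral_subtype_comap measurableSet_Ioi]
      rfl

theorem lintegral_ball_enorm_sub_rpow [Nontrivial E] {a r : ℝ} (ha : 0 < finrank ℝ E + a)
    (hr : 0 ≤ r) (x : E) :
    ∫⁻ w in ball x r, ‖w - x‖ₑ ^ a ∂μ =
      finrank ℝ E * μ (ball 0 1) *
        ENNReal.ofReal (r ^ (finrank ℝ E + a) / (finrank ℝ E + a)) := by
  have hradial (w : E) : (ball x r).indicator (fun w ↦ ‖w - x‖ₑ ^ a) w =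
      (Iio r).indicator (fun t ↦ ENNReal.ofReal t ^ a) ‖w - x‖ := by
    simp [indicator, dist_eq_norm]
  have hpow (t : ℝ) (ht : t ∈ Ioo 0 r) :
      ENNReal.ofReal (t ^ (finrank ℝ E - 1)) * ENNReal.ofReal t ^ a =
        ENNReal.ofReal (t ^ (finrank ℝ E + a - 1)) := by
    rw [ENNReal.ofReal_rpow_of_pos ht.1, ← ENNReal.ofReal_mul (by have := ht.1; positivity),
      ← Real.rpow_natCast, ← Real.rpow_add ht.1, Nat.cast_pred finrank_pos]
    congr 2
    ring
  rw [← lintegral_indicator measurableSet_ball, lintegral_congr hradial,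
    lintegral_sub_right_eq_self
      (fun w ↦ (Iio r).indicator (fun t ↦ ENNReal.ofReal t ^ a) ‖w‖) x,
    lintegral_fun_norm_addHaar μ ((by fun_prop : Measurable _).indicator measurableSet_Iio)]
  congr 1
  simp_rw [← indicator_mul_right _ (fun t : ℝ ↦ ENNReal.ofReal (t ^ (finrank ℝ E - 1)))]
  rw [setLIntegral_indicator measurableSet_Iio, inter_comm, Ioi_inter_Iio,
    setLIntegral_congr_fun measurableSet_Ioo hpow, lintegral_Ioo_rpow (by linarith) hr,
    sub_add_cancel]

end Radial

section Segments

variable {E : Type*} [NormedAddCommGroup E] [NormedSpace ℝ E]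

theorem enorm_sub_le_lintegral_fderiv_lineMap {K : ℝ≥0} {f : E → ℝ} (hf : LipschitzWith K f)
    {x z : E} (hdiff : ∀ᵐ t : ℝ, DifferentiableAt ℝ f (lineMap x z t)) :
    ‖f z - f x‖ₑ ≤ ‖z - x‖ₑ * ∫⁻ t in Ioo (0 : ℝ) 1, ‖fderiv ℝ f (lineMap x z t)‖ₑ := by
  have hac : AbsolutelyContinuousOnInterval (fun t : ℝ ↦ f (lineMap x z t)) 0 1 :=
    (hf.comp (lipschitzWith_lineMap x z)).lipschitzOnWith.absolutelyContinuousOnInterval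
  have hftc : ∫ t in Ioo (0 : ℝ) 1, deriv (fun t : ℝ ↦ f (lineMap x z t)) t = f z - f x := by
    rw [← integral_Ioc_eq_integral_Ioo, ← intervalIntegral.integral_of_le zero_le_one,
      hac.integral_deriv_eq_sub, lineMap_apply_one, lineMap_apply_zero]
  rw [← hftc, ← lintegral_const_mul' _ _ enorm_ne_top]
  refine (enorm_integral_le_lintegral_enorm _).trans (lintegral_mono_ae ?_)
  filter_upwards [ae_restrict_of_ae hdiff] with t ht
  have hchain : deriv (fun t : ℝ ↦ f (lineMap x z t)) t = fderiv ℝ f (lineMap x z t) (z - x) :=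
    (ht.hasFDerivAt.comp_hasDerivAt t hasDerivAt_lineMap).deriv
  rw [hchain, mul_comm]
  exact (fderiv ℝ f _).le_opENorm _

variable [FiniteDimensional ℝ E] [MeasurableSpace E] [BorelSpace E]
  (μ : Measure E) [μ.IsAddHaarMeasure]

theorem map_lineMap_addHaar (x : E) {t : ℝ} (ht : t ≠ 0) :
    μ.map (fun z ↦ lineMap x z t) = ENNReal.ofReal |(t ^ finrank ℝ E)⁻¹| • μ := by
  have hcomp : (fun z ↦ lineMap x z t) = (· + x) ∘ (t • ·) ∘ (· - x) := by
    ext z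
    simp [lineMap_apply]
  rw [hcomp, ← Measure.map_map (by fun_prop) (by fun_prop),
    ← Measure.map_map (by fun_prop) (by fun_prop), (measurePreserving_sub_right μ x).map_eq,
    Measure.map_addHaar_smul μ ht, Measure.map_smul, (measurePreserving_add_right μ x).map_eq]

theorem measurable_lineMap_uncurry (x : E) :
    Measurable fun p : E × ℝ ↦ lineMap x p.1 p.2 := by
  simp only [lineMap_apply_module']
  fun_prop

theorem ae_ae_lineMap {p : E → Prop} (hp : ∀ᵐ w ∂μ, p w) (x : E) :
    ∀ᵐ z ∂μ, ∀ᵐ t : ℝ, p (lineMap x z t) := by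
  obtain ⟨N, hpN, hN, hμN⟩ := exists_measurable_superset_of_null hp
  have hNae : ∀ᵐ z ∂μ, ∀ᵐ t : ℝ, lineMap x z t ∉ N := by
    refine (Measure.ae_ae_comm (p := fun z t ↦ lineMap x z t ∉ N)
      (measurable_lineMap_uncurry x hN.compl)).2 ?_
    filter_upwards [Measure.ae_ne volume 0] with t ht
    refine ae_of_ae_map (p := (· ∉ N)) (by fun_prop) ?_
    rw [map_lineMap_addHaar μ x ht]
    exact Measure.smul_absolutelyContinuous.ae_le (measure_eq_zero_iff_ae_notMem.1 hμN)
  filter_upwards [hNae] with z hz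
  filter_upwards [hz] with t ht
  exact not_not.1 fun h ↦ ht (hpN h)

end Segments

section RieszPotential

variable {E : Type*} [NormedAddCommGroup E] [NormedSpace ℝ E] [MeasurableSpace E]

/-- The Riesz potential of order one of `φ` at `x`, without its normalising factor. To integrate
over a domain `s`, take the measure `μ.restrict s`. -/
noncomputable def rieszPotential (μ : Measure E) (φ : E → ℝ≥0∞) (x : E) : ℝ≥0∞ :=
  ∫⁻ w, φ w * ‖w - x‖ₑ ^ (1 - (finrank ℝ E : ℝ)) ∂μ

variable [BorelSpace E] [FiniteDimensional ℝ E] (μ : Measure E) [μ.IsAddHaarMeasure]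
  {s : Set E} {x : E} {D : ℝ} {φ : E → ℝ≥0∞}

theorem setLIntegral_comp_lineMap_le (hs : MeasurableSet s) (hstar : StarConvex ℝ x s)
    (hsx : s ⊆ ball x D) (hφ : Measurable φ) {t : ℝ} (ht : t ∈ Ioo 0 1) :
    ∫⁻ z in s, φ (lineMap x z t) ∂μ ≤
      ENNReal.ofReal (t ^ (-(finrank ℝ E : ℝ))) * ∫⁻ w in ball x (t * D) ∩ s, φ w ∂μ := by
  have hmaps : s ⊆ (fun z ↦ lineMap x z t) ⁻¹' (ball x (t * D) ∩ s) := by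
    intro z hz
    have hzD : dist x z < D := mem_ball'.1 (hsx hz)
    constructor
    · rw [mem_ball, dist_lineMap_left, Real.norm_of_nonneg ht.1.le]
      exact mul_lt_mul_of_pos_left hzD ht.1
    · change lineMap x z t ∈ s
      rw [lineMap_apply_module', add_comm]
      exact hstar.add_smul_sub_mem hz ht.1.le ht.2.le
  refine (lintegral_mono_set hmaps).trans_eq ?_
  rw [← setLIntegral_map (measurableSet_ball.inter hs) hφ (by fun_prop),
    map_lineMap_addHaar μ x ht.1.ne', Measure.restrict_smul, lintegral_smul_measure,
    smul_eq_mul, abs_of_pos (by have := ht.1; positivity), Real.rpow_neg ht.1.le,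
    Real.rpow_natCast]

theorem lintegral_lintegral_lineMap_le_rieszPotential (hd : 2 ≤ finrank ℝ E)
    (hs : MeasurableSet s) (hstar : StarConvex ℝ x s) (hD : 0 < D) (hsx : s ⊆ ball x D)
    (hφ : Measurable φ) :
    ∫⁻ z in s, (∫⁻ t in Ioo (0 : ℝ) 1, φ (lineMap x z t)) ∂μ ≤
      ENNReal.ofReal (D ^ (finrank ℝ E - 1 : ℝ) / (finrank ℝ E - 1)) *
        rieszPotential (μ.restrict s) φ x := by
  have : Nontrivial E := nontrivial_of_finrank_pos (R := ℝ) (by lia)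
  have hd_one : (1 : ℝ) < finrank ℝ E := by exact_mod_cast hd
  calc
    _ = ∫⁻ t in Ioo (0 : ℝ) 1, ∫⁻ z in s, φ (lineMap x z t) ∂μ :=
      lintegral_lintegral_swap (hφ.comp (measurable_lineMap_uncurry x)).aemeasurable
    _ ≤ ∫⁻ t in Ioo (0 : ℝ) 1, ENNReal.ofReal (t ^ (-(finrank ℝ E : ℝ))) *
          ∫⁻ w in ball x (t * D), φ w ∂μ.restrict s := by
      refine setLIntegral_mono' measurableSet_Ioo fun t ht ↦ ?_
      rw [Measure.restrict_restrict measurableSet_ball]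
      exact setLIntegral_comp_lineMap_le μ hs hstar hsx hφ ht
    _ = ∫⁻ w in s, φ w * ∫⁻ t in Ioi (dist w x / D), ENNReal.ofReal (t ^ (-(finrank ℝ E : ℝ)))
          ∂volume.restrict (Ioo 0 1) ∂μ :=
      lintegral_mul_setLIntegral_ball (by fun_prop) hφ x hD
    _ ≤ ∫⁻ w in s, ENNReal.ofReal (D ^ (finrank ℝ E - 1 : ℝ) / (finrank ℝ E - 1)) *
          (φ w * ‖w - x‖ₑ ^ (1 - (finrank ℝ E : ℝ))) ∂μ := by
      refine lintegral_mono_ae (ae_restrict_of_ae ?_)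
      filter_upwards [Measure.ae_ne μ x] with w hw
      rw [mul_left_comm, ← ofReal_norm, ← dist_eq_norm,
        ← lintegral_Ioi_div_rpow_neg hd_one (dist_pos.2 hw) hD]
      gcongr
      exact Measure.restrict_le_self
    _ = _ := lintegral_const_mul' _ _ ENNReal.ofReal_ne_top

theorem lintegral_enorm_sub_le_rieszPotential {K : ℝ≥0} {f : E → ℝ} (hf : LipschitzWith K f)
    (hd : 2 ≤ finrank ℝ E) (hs : MeasurableSet s) (hstar : StarConvex ℝ x s) (hD : 0 < D)
    (hsx : s ⊆ ball x D) :
    ∫⁻ z in s, ‖f z - f x‖ₑ ∂μ ≤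
      ENNReal.ofReal (D ^ finrank ℝ E / (finrank ℝ E - 1)) *
        rieszPotential (μ.restrict s) (‖fderiv ℝ f ·‖ₑ) x := by
  calc
    _ ≤ ∫⁻ z in s, (ENNReal.ofReal D *
          ∫⁻ t in Ioo (0 : ℝ) 1, ‖fderiv ℝ f (lineMap x z t)‖ₑ) ∂μ := by
      refine lintegral_mono_ae ?_
      filter_upwards [ae_restrict_mem hs,
        ae_restrict_of_ae (ae_ae_lineMap μ hf.ae_differentiableAt x)] with z hz hdiff
      refine (enorm_sub_le_lintegral_fderiv_lineMap hf hdiff).trans ?_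
      gcongr
      rw [← ofReal_norm]
      exact ENNReal.ofReal_le_ofReal (mem_ball_iff_norm.1 (hsx hz)).le
    _ ≤ ENNReal.ofReal D * (ENNReal.ofReal (D ^ (finrank ℝ E - 1 : ℝ) / (finrank ℝ E - 1)) *
          rieszPotential (μ.restrict s) (‖fderiv ℝ f ·‖ₑ) x) := by
      rw [lintegral_const_mul' _ _ ENNReal.ofReal_ne_top]
      gcongr
      exact lintegral_lintegral_lineMap_le_rieszPotential μ hd hs hstar hD hsx
        (measurable_fderiv ℝ f).enorm
    _ = _ := by
      rw [← mul_assoc, ← ENNReal.ofReal_mul hD.le, ← mul_div_assoc, Real.rpow_sub_one hD.ne',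
        mul_div_cancel₀ _ hD.ne', Real.rpow_natCast]

theorem lintegral_ball_rieszKernel_rpow [Nontrivial E] {q : ℝ} (hq : finrank ℝ E < q)
    (hD : 0 ≤ D) (x : E) :
    (∫⁻ w in ball x D, (‖w - x‖ₑ ^ (1 - (finrank ℝ E : ℝ))) ^ q.conjExponent ∂μ) ^
        (1 / q.conjExponent) =
      ENNReal.ofReal (D ^ (1 - finrank ℝ E / q) *
        (finrank ℝ E * μ.real (ball 0 1) * ((q - 1) / (q - finrank ℝ E))) ^ (1 - 1 / q)) := by
  have hd : (1 : ℝ) ≤ finrank ℝ E := by exact_mod_cast finrank_pos (R := ℝ) (M := E)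
  have hq_sub : 0 < q - finrank ℝ E := by linarith
  have hq_one : 0 < q - 1 := by linarith
  have hq_pos : 0 < q := by linarith
  have hinv : 1 / q.conjExponent = 1 - 1 / q := by
    rw [one_div, one_div]
    exact (Real.HolderConjugate.conjExponent (by linarith)).one_sub_inv.symm
  have hinv_nonneg : 0 ≤ 1 - 1 / q := by
    rw [sub_nonneg, div_le_one hq_pos]
    linarith
  have hexp : finrank ℝ E + (1 - finrank ℝ E) * q.conjExponent =
      (q - finrank ℝ E) / (q - 1) := by
    rw [Real.conjExponent]
    field_simp
    ring
  have hexp_mul : (q - finrank ℝ E) / (q - 1) * (1 - 1 / q) = 1 - finrank ℝ E / q := by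
    field_simp
  simp_rw [← ENNReal.rpow_mul]
  rw [lintegral_ball_enorm_sub_rpow μ (by rw [hexp]; positivity) hD, hinv, hexp,
    ← ofReal_measureReal measure_ball_lt_top.ne, ← ENNReal.ofReal_natCast,
    ← ENNReal.ofReal_mul (by positivity), ← ENNReal.ofReal_mul (by positivity),
    ENNReal.ofReal_rpow_of_nonneg (by positivity) hinv_nonneg, ← hexp_mul,
    Real.rpow_mul hD, ← Real.mul_rpow (by positivity) (by positivity)]
  congr 2
  field_simp

theorem rieszPotential_le [Nontrivial E] {q : ℝ} (hq : finrank ℝ E < q) (hD : 0 ≤ D)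
    (hsx : s ⊆ ball x D) (hφ : Measurable φ) :
    rieszPotential (μ.restrict s) φ x ≤
      (∫⁻ w in s, φ w ^ q ∂μ) ^ (1 / q) *
        ENNReal.ofReal (D ^ (1 - finrank ℝ E / q) *
          (finrank ℝ E * μ.real (ball 0 1) * ((q - 1) / (q - finrank ℝ E))) ^ (1 - 1 / q)) := by
  have hd : (1 : ℝ) ≤ finrank ℝ E := by exact_mod_cast finrank_pos (R := ℝ) (M := E)
  have hconj : q.HolderConjugate q.conjExponent := .conjExponent (by linarith)
  have hconj_pos : 0 < q.conjExponent := hconj.symm.pos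
  refine (ENNReal.lintegral_mul_le_Lp_mul_Lq _ hconj hφ.aemeasurable (by fun_prop)).trans ?_
  rw [← lintegral_ball_rieszKernel_rpow μ hq hD x]
  gcongr

end RieszPotential

section Morrey

/-- The constant bounding the integral of `|f - f x|` over a set that is star-convex at `x` and
lies within distance `D` of `x` by the `L^q` norm of the gradient of `f`, in dimension `d`, where
`V` is the volume of the unit ball. It has this meaning only for `2 ≤ d < q`: at `d = 1` and at
`q = d` a denominator vanishes. -/
noncomputable def morreyConst (d : ℕ) (V D q : ℝ) : ℝ :=
  D ^ d / (d - 1) * (D ^ (1 - d / q) * (d * V * ((q - 1) / (q - d))) ^ (1 - 1 / q))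

theorem morreyConst_nonneg {d : ℕ} (hd : 1 ≤ d) {V D q : ℝ} (hV : 0 ≤ V) (hD : 0 ≤ D)
    (hq : d < q) : 0 ≤ morreyConst d V D q := by
  have hd_one : (1 : ℝ) ≤ d := by exact_mod_cast hd
  have : (0 : ℝ) ≤ d - 1 := by linarith
  have : 0 < q - d := by linarith
  have hq_one : 0 ≤ q - 1 := by linarith
  unfold morreyConst
  positivity

theorem rpow_le_max_one {b θ : ℝ} (hb : 0 ≤ b) (hθ : θ ∈ Icc (0 : ℝ) 1) : b ^ θ ≤ max 1 b := by
  calc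
    b ^ θ ≤ max 1 b ^ θ := Real.rpow_le_rpow hb (le_max_right 1 b) hθ.1
    _ ≤ max 1 b ^ (1 : ℝ) := Real.rpow_le_rpow_of_exponent_le (le_max_left 1 b) hθ.2
    _ = max 1 b := Real.rpow_one _

theorem morreyConst_le {d : ℕ} (hd : 1 ≤ d) {V D Q q : ℝ} (hV : 0 ≤ V) (hD : 0 ≤ D)
    (hq : q ∈ Ioc (d : ℝ) Q) :
    morreyConst d V D q ≤
      D ^ d / (d - 1) * (max 1 D * max 1 (d * V * Q)) * (q - d) ^ (-1 + 1 / q) := by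
  have hd_one : (1 : ℝ) ≤ d := by exact_mod_cast hd
  have : (0 : ℝ) ≤ d - 1 := by linarith
  have hq_pos : 0 < q := by linarith [hq.1]
  have hq_sub : 0 < q - d := by linarith [hq.1]
  have hq_one : 0 ≤ q - 1 := by linarith [hq.1]
  have : 0 ≤ Q := by linarith [hq.2]
  have hle_one : 1 / q ≤ 1 := (div_le_one hq_pos).2 (by linarith)
  have hdiv_le_one : d / q ≤ 1 := (div_le_one hq_pos).2 hq.1.le
  have hdiv_nonneg : 0 ≤ d / q := by positivity
  have hinv_nonneg : 0 ≤ 1 / q := by positivity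
  have hdiam : D ^ (1 - d / q) ≤ max 1 D :=
    rpow_le_max_one hD ⟨by linarith, by linarith⟩
  have hkernel : (d * V * ((q - 1) / (q - d))) ^ (1 - 1 / q) ≤
      max 1 (d * V * Q) * (q - d) ^ (-1 + 1 / q) := by
    rw [← mul_div_assoc, Real.div_rpow (by positivity) hq_sub.le, div_eq_mul_inv,
      ← Real.rpow_neg hq_sub.le, neg_sub, sub_eq_neg_add (1 / q)]
    gcongr
    refine (rpow_le_max_one (by positivity) ⟨by linarith, by linarith⟩).trans ?_
    gcongr
    linarith [hq.2]
  calc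
    _ ≤ D ^ d / (d - 1) * (max 1 D * (max 1 (d * V * Q) * (q - d) ^ (-1 + 1 / q))) := by
      unfold morreyConst
      gcongr
    _ = _ := by ring

theorem enorm_sub_mul_measure_univ_le {α F : Type*} [MeasurableSpace α] [SeminormedAddCommGroup F]
    [MeasurableSpace F] [OpensMeasurableSpace F] [MeasurableSub F] {ν : Measure α} {f : α → F}
    (hf : AEMeasurable f ν) (a b : F) :
    ‖a - b‖ₑ * ν univ ≤ ∫⁻ z, ‖f z - a‖ₑ ∂ν + ∫⁻ z, ‖f z - b‖ₑ ∂ν := by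
  rw [← lintegral_const, ← lintegral_add_left' (hf.sub_const a).enorm]
  refine lintegral_mono fun z ↦ ?_
  rw [enorm_sub_rev (f z) a]
  simpa only [edist_eq_enorm_sub] using edist_triangle a (f z) b

variable {E : Type*} [NormedAddCommGroup E] [NormedSpace ℝ E] [MeasurableSpace E] [BorelSpace E]
  (μ : Measure E) {s : Set E} {K : ℝ≥0} {x y : E} {D q : ℝ}

theorem lintegral_enorm_fderiv_rpow {f : E → ℝ} (hf : LipschitzWith K f) (hμs : μ s ≠ ∞)
    (hq : 0 ≤ q) :
    ∫⁻ z in s, ‖fderiv ℝ f z‖ₑ ^ q ∂μ = ENNReal.ofReal (∫ z in s, ‖fderiv ℝ f z‖ ^ q ∂μ) := by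
  have hint : IntegrableOn (fun z ↦ ‖fderiv ℝ f z‖ ^ q) s μ := by
    refine Measure.integrableOn_of_bounded (M := K ^ q) hμs
      ((measurable_fderiv ℝ f).norm.pow_const q).aestronglyMeasurable (.of_forall fun z ↦ ?_)
    rw [Real.norm_of_nonneg (by positivity)]
    exact Real.rpow_le_rpow (norm_nonneg _) (norm_fderiv_le_of_lipschitz ℝ hf) hq
  rw [ofReal_integral_eq_lintegral_ofReal hint (.of_forall fun z ↦ by positivity)]
  refine lintegral_congr fun z ↦ ?_
  rw [← ofReal_norm, ENNReal.ofReal_rpow_of_nonneg (norm_nonneg _) hq]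

variable [FiniteDimensional ℝ E] [μ.IsAddHaarMeasure]

theorem lintegral_enorm_sub_le_morreyConst {f : E → ℝ} (hf : LipschitzWith K f)
    (hd : 2 ≤ finrank ℝ E) (hs : MeasurableSet s) (hstar : StarConvex ℝ x s) (hD : 0 < D)
    (hsx : s ⊆ ball x D) (hq : finrank ℝ E < q) :
    ∫⁻ z in s, ‖f z - f x‖ₑ ∂μ ≤
      ENNReal.ofReal (morreyConst (finrank ℝ E) (μ.real (ball 0 1)) D q *
        (∫ z in s, ‖fderiv ℝ f z‖ ^ q ∂μ) ^ (1 / q)) := by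
  have : Nontrivial E := nontrivial_of_finrank_pos (R := ℝ) (by lia)
  have hd_one : (1 : ℝ) ≤ finrank ℝ E := by exact_mod_cast one_le_two.trans hd
  have hq_pos : 0 < q := by linarith
  have : (0 : ℝ) ≤ finrank ℝ E - 1 := by linarith
  have hμs : μ s ≠ ∞ := measure_ne_top_of_subset hsx measure_ball_lt_top.ne
  have hgrad : (∫⁻ z in s, ‖fderiv ℝ f z‖ₑ ^ q ∂μ) ^ (1 / q) =
      ENNReal.ofReal ((∫ z in s, ‖fderiv ℝ f z‖ ^ q ∂μ) ^ (1 / q)) := by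
    rw [lintegral_enorm_fderiv_rpow μ hf hμs hq_pos.le, ENNReal.ofReal_rpow_of_nonneg
      (integral_nonneg fun z ↦ by positivity) (by positivity)]
  rw [ENNReal.ofReal_mul (morreyConst_nonneg (by lia) measureReal_nonneg hD.le hq), ← hgrad,
    morreyConst, ENNReal.ofReal_mul (by positivity), mul_assoc, mul_comm (ENNReal.ofReal (_ * _))]
  refine (lintegral_enorm_sub_le_rieszPotential μ hf hd hs hstar hD hsx).trans ?_
  gcongr
  exact rieszPotential_le μ hq hD.le hsx (measurable_fderiv ℝ f).enorm

theorem abs_sub_le_morreyConst_of_lipschitzWith {f : E → ℝ} (hf : LipschitzWith K f)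
    (hd : 2 ≤ finrank ℝ E) (hs : IsOpen s) (hconv : Convex ℝ s) (hsD : ∀ z ∈ s, s ⊆ ball z D)
    (hq : finrank ℝ E < q) (hx : x ∈ s) (hy : y ∈ s) :
    |f x - f y| ≤ 2 * morreyConst (finrank ℝ E) (μ.real (ball 0 1)) D q / μ.real s *
      (∫ z in s, ‖fderiv ℝ f z‖ ^ q ∂μ) ^ (1 / q) := by
  have hD : 0 < D := pos_of_mem_ball (hsD x hx hx)
  have hμs : μ s ≠ ∞ := measure_ne_top_of_subset (hsD x hx) measure_ball_lt_top.ne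
  have hμs_pos : 0 < μ.real s := ENNReal.toReal_pos (hs.measure_pos μ ⟨x, hx⟩).ne' hμs
  have : 0 ≤ ∫ z in s, ‖fderiv ℝ f z‖ ^ q ∂μ := integral_nonneg fun z ↦ by positivity
  have hconst := morreyConst_nonneg (V := μ.real (ball (0 : E) 1)) (one_le_two.trans hd)
    measureReal_nonneg hD.le hq
  have hint {z : E} (hz : z ∈ s) :=
    lintegral_enorm_sub_le_morreyConst μ hf hd hs.measurableSet (hconv.starConvex hz) hD
      (hsD z hz) hq
  have hmean := (enorm_sub_mul_measure_univ_le (ν := μ.restrict s)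
    hf.continuous.aemeasurable (f x) (f y)).trans (add_le_add (hint hx) (hint hy))
  rw [Measure.restrict_apply_univ, ← ofReal_norm, Real.norm_eq_abs, ← ofReal_measureReal hμs,
    ← ENNReal.ofReal_mul (abs_nonneg _), ← ENNReal.ofReal_add (by positivity) (by positivity),
    ENNReal.ofReal_le_ofReal_iff (by positivity), ← le_div_iff₀ hμs_pos] at hmean
  refine hmean.trans_eq ?_
  ring

theorem abs_sub_le_morreyConst {g : E → ℝ} (hg : LipschitzOnWith K g s)
    (hd : 2 ≤ finrank ℝ E) (hs : IsOpen s) (hconv : Convex ℝ s) (hsD : ∀ z ∈ s, s ⊆ ball z D)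
    (hq : finrank ℝ E < q) (hx : x ∈ s) (hy : y ∈ s) :
    |g x - g y| ≤ 2 * morreyConst (finrank ℝ E) (μ.real (ball 0 1)) D q / μ.real s *
      (∫ z in s, ‖fderiv ℝ g z‖ ^ q ∂μ) ^ (1 / q) := by
  obtain ⟨f, hf, hgf⟩ := hg.extend_real
  have hgrad : ∫ z in s, ‖fderiv ℝ g z‖ ^ q ∂μ = ∫ z in s, ‖fderiv ℝ f z‖ ^ q ∂μ := by
    refine setIntegral_congr_fun hs.measurableSet fun z hz ↦ ?_
    simp only [(hgf.eventuallyEq_of_mem (hs.mem_nhds hz)).fderiv_eq]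
  rw [hgrad, hgf hx, hgf hy]
  exact abs_sub_le_morreyConst_of_lipschitzWith μ hf hd hs hconv hsD hq hx hy

theorem morrey_tracked_constant_general (hd : 2 ≤ finrank ℝ E) (hs : IsOpen s)
    (hconv : Convex ℝ s) (hbdd : Bornology.IsBounded s) (Q : ℝ) :
    ∃ C : ℝ, 0 < C ∧ ∀ q ∈ Ioc (finrank ℝ E : ℝ) Q, ∀ (g : E → ℝ) (K : ℝ≥0),
      LipschitzOnWith K g s → ∀ x ∈ s, ∀ y ∈ s,
        |g x - g y| ≤ C * (q - finrank ℝ E) ^ (-1 + 1 / q) *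
          (∫ z in s, ‖fderiv ℝ g z‖ ^ q ∂μ) ^ (1 / q) := by
  rcases s.eq_empty_or_nonempty with rfl | hne
  · exact ⟨1, one_pos, by simp⟩
  set D := diam s + 1
  set V := μ.real (ball (0 : E) 1)
  have hD : 0 < D := by positivity
  have hsD : ∀ z ∈ s, s ⊆ ball z D := fun z hz w hw ↦
    (dist_le_diam_of_mem hbdd hw hz).trans_lt (lt_add_one _)
  have hμs_pos : 0 < μ.real s :=
    ENNReal.toReal_pos (hs.measure_pos μ hne).ne' hbdd.measure_lt_top.ne
  have hd_sub : (0 : ℝ) < finrank ℝ E - 1 := by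
    rw [sub_pos]
    exact_mod_cast hd
  refine ⟨2 * (D ^ finrank ℝ E / (finrank ℝ E - 1) *
    (max 1 D * max 1 (finrank ℝ E * V * Q))) / μ.real s, by positivity, ?_⟩
  intro q hq g K hg x hx y hy
  refine (abs_sub_le_morreyConst μ hg hd hs hconv hsD hq.1 hx hy).trans ?_
  rw [div_mul_eq_mul_div _ _ ((q - finrank ℝ E) ^ (-1 + 1 / q)), mul_assoc 2]
  gcongr
  exact morreyConst_le (by lia) measureReal_nonneg hD.le hq

end Morrey

/-- Morrey inequality with tracked constant: for every integer `m ≥ 2` there is a constant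
`C = C(m)` such that for every exponent `q ∈ (m, m+1)` and every Lipschitz function
`g` on the open unit ball `B₁ ⊂ ℝᵐ`,
`|g(x) − g(y)| ≤ C·(q−m)^{−1+1/q}·(∫_{B₁} |∇g|^q)^{1/q}` for all `x, y ∈ B₁`. -/
theorem morrey_tracked_constant (m : ℕ) (hm : 2 ≤ m) :
    ∃ C : ℝ, 0 < C ∧
      ∀ q : ℝ, q ∈ Set.Ioo (m : ℝ) (m + 1) →
        ∀ (g : EuclideanSpace ℝ (Fin m) → ℝ) (K : NNReal),
          LipschitzOnWith K g (Metric.ball 0 1) →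
          ∀ x ∈ Metric.ball (0 : EuclideanSpace ℝ (Fin m)) 1,
            ∀ y ∈ Metric.ball (0 : EuclideanSpace ℝ (Fin m)) 1,
              |g x - g y| ≤
                C * (q - m) ^ (-1 + 1 / q) *
                  (∫ z in Metric.ball (0 : EuclideanSpace ℝ (Fin m)) 1,
                      ‖fderiv ℝ g z‖ ^ q) ^ (1 / q) := by
  obtain ⟨C, hC, hmorrey⟩ := morrey_tracked_constant_general
    (volume : Measure (EuclideanSpace ℝ (Fin m))) (by simpa using hm) isOpen_ball
    (convex_ball 0 1) isBounded_ball (m + 1)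
  rw [finrank_euclideanSpace_fin] at hmorrey
  exact ⟨C, hC, fun q hq ↦ hmorrey q (Ioo_subset_Ioc_self hq)⟩
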